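/- arXiv:2603.04204 — 5 statements merged into one kernel-verified Lean document; each statement's English description precedes it below -/
import Mathlib

section
/- (Wisdom of Crowds on log-likelihood, case 0 < r ≤ 1.) Let d ≥ 1, k ≥ 1, and let p⁽¹⁾, …, p⁽ᵏ⁾ be probability densities on ℝ^d (strictly positive measurable functions integrating to 1 with respect to Lebesgue measure). Let r be a real number with 0 < r ≤ 1 and set M_{k,r}(x) = ((1/k) · Σ_{i=1}^k p⁽ⁱ⁾(x)^r)^{1/r} and Z_{k,r} = ∫_{ℝ^d} M_{k,r}(x) dx. Then 0 < Z_{k,r} ≤ 1, and for every x ∈ ℝ^d: log(M_{k,r}(x) / Z_{k,r}) ≥ (1/k) · Σ_{i=1}^k log p⁽ⁱ⁾(x). -/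
/-!
The power mean of order `r ≤ 1` lies between the geometric and the arithmetic mean. The upper
bound (`powerMean_le_arithMean`, convexity of `t ↦ t ^ (1 / r)`) makes the power mean integrable
with integral at most `1`, the arithmetic mean of densities being a density; strict positivity
of the power mean gives `0 < Z`. The lower bound (`mean_log_le_log_powerMean`, concavity of `log`)
is the pointwise inequality for `M`, and dividing by `Z ≤ 1` can only increase the logarithm.
-/

open MeasureTheory Real

lemma mean_rpow_pos {k : ℕ} (hk : 1 ≤ k) (a : Fin k → ℝ) (ha : ∀ i, 0 < a i) (r : ℝ) :
    0 < (1 / (k : ℝ)) * ∑ i, a i ^ r := by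
  have hk0 : (0 : ℝ) < k := by exact_mod_cast hk
  have : 0 < ∑ i, a i ^ r :=
    Finset.sum_pos (fun i _ => rpow_pos_of_pos (ha i) r) ⟨⟨0, hk⟩, Finset.mem_univ _⟩
  positivity

lemma sum_uniform_weights {k : ℕ} (hk : 1 ≤ k) : ∑ _i : Fin k, 1 / (k : ℝ) = 1 := by
  have hk0 : (k : ℝ) ≠ 0 := by exact_mod_cast (by omega : k ≠ 0)
  simp [hk0]

lemma powerMean_le_arithMean {k : ℕ} (hk : 1 ≤ k) (a : Fin k → ℝ) (ha : ∀ i, 0 < a i)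
    {r : ℝ} (hr0 : 0 < r) (hr1 : r ≤ 1) :
    ((1 / (k : ℝ)) * ∑ i, a i ^ r) ^ (1 / r) ≤ (1 / (k : ℝ)) * ∑ i, a i := by
  have h := Real.rpow_arith_mean_le_arith_mean_rpow Finset.univ (fun _ : Fin k => 1 / (k : ℝ))
    (fun i => a i ^ r) (fun _ _ => by positivity) (sum_uniform_weights hk)
    (fun i _ => (rpow_pos_of_pos (ha i) r).le) (one_le_one_div hr0 hr1)
  have e : ∀ i, (a i ^ r) ^ (1 / r) = a i := fun i => by
    rw [← rpow_mul (ha i).le, mul_one_div_cancel hr0.ne', rpow_one]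
  simpa only [e, ← Finset.mul_sum] using h

lemma mean_log_le_log_powerMean {k : ℕ} (hk : 1 ≤ k) (a : Fin k → ℝ) (ha : ∀ i, 0 < a i)
    {r : ℝ} (hr0 : 0 < r) :
    (1 / (k : ℝ)) * ∑ i, Real.log (a i) ≤
      Real.log (((1 / (k : ℝ)) * ∑ i, a i ^ r) ^ (1 / r)) := by
  have h := strictConcaveOn_log_Ioi.concaveOn.le_map_sum (t := Finset.univ)
    (w := fun _ : Fin k => 1 / (k : ℝ)) (p := fun i => a i ^ r)
    (fun _ _ => by positivity) (sum_uniform_weights hk)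
    (fun i _ => rpow_pos_of_pos (ha i) r)
  have e : ∀ i, Real.log (a i ^ r) = r * Real.log (a i) := fun i => log_rpow (ha i) r
  simp only [smul_eq_mul, e, ← Finset.mul_sum] at h
  rw [log_rpow (mean_rpow_pos hk a ha r), one_div_mul_eq_div r, le_div_iff₀ hr0]
  linarith

/-- Wisdom of Crowds on log-likelihood, case `0 < r ≤ 1`: the normalization constant
`Z_{k,r}` satisfies `0 < Z_{k,r} ≤ 1` and the log of the normalized power mean density
dominates the average individual log-likelihood at every point. -/
theorem wisdom_of_crowds_log_likelihood
    (d k : ℕ) (hd : 1 ≤ d) (hk : 1 ≤ k)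
    (p : Fin k → (Fin d → ℝ) → ℝ)
    (hmeas : ∀ i, Measurable (p i))
    (hpos : ∀ i x, 0 < p i x)
    (hint : ∀ i, (∫ x, p i x) = 1)
    (r : ℝ) (hr0 : 0 < r) (hr1 : r ≤ 1) :
    0 < (∫ x, ((1 / (k : ℝ)) * ∑ i, p i x ^ r) ^ (1 / r)) ∧
    (∫ x, ((1 / (k : ℝ)) * ∑ i, p i x ^ r) ^ (1 / r)) ≤ 1 ∧
    ∀ x : Fin d → ℝ,
      Real.log ((((1 / (k : ℝ)) * ∑ i, p i x ^ r) ^ (1 / r)) /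
          (∫ y, ((1 / (k : ℝ)) * ∑ i, p i y ^ r) ^ (1 / r)))
        ≥ (1 / (k : ℝ)) * ∑ i, Real.log (p i x) := by
  have hI : ∀ i, Integrable (p i) := fun i => by
    -- a function with nonzero Bochner integral is integrable
    by_contra h
    simpa [integral_undef h] using hint i
  have hA : Integrable (fun x => (1 / (k : ℝ)) * ∑ i, p i x) :=
    (integrable_finsetSum _ fun i _ => hI i).const_mul _
  have hMpos : ∀ x, 0 < ((1 / (k : ℝ)) * ∑ i, p i x ^ r) ^ (1 / r) := fun x =>
    rpow_pos_of_pos (mean_rpow_pos hk _ (fun i => hpos i x) r) _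
  have hle : ∀ x, ((1 / (k : ℝ)) * ∑ i, p i x ^ r) ^ (1 / r) ≤ (1 / (k : ℝ)) * ∑ i, p i x :=
    fun x => powerMean_le_arithMean hk _ (fun i => hpos i x) hr0 hr1
  have hMm : Measurable (fun x => ((1 / (k : ℝ)) * ∑ i, p i x ^ r) ^ (1 / r)) := by
    fun_prop
  have hM : Integrable (fun x => ((1 / (k : ℝ)) * ∑ i, p i x ^ r) ^ (1 / r)) :=
    hA.mono' hMm.aestronglyMeasurable (Filter.Eventually.of_forall fun x => by
      rw [Real.norm_of_nonneg (hMpos x).le]; exact hle x)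
  have hZ0 : 0 < ∫ x, ((1 / (k : ℝ)) * ∑ i, p i x ^ r) ^ (1 / r) := by
    rw [integral_pos_iff_support_of_nonneg (fun x => (hMpos x).le) hM,
      Function.support_eq_univ fun x => (hMpos x).ne']
    exact Measure.measure_univ_pos.2 (NeZero.ne _)
  have hZ1 : (∫ x, ((1 / (k : ℝ)) * ∑ i, p i x ^ r) ^ (1 / r)) ≤ 1 := by
    refine (integral_mono hM hA hle).trans_eq ?_
    rw [integral_const_mul, integral_finsetSum _ fun i _ => hI i, Finset.mul_sum]
    simpa only [hint, mul_one] using sum_uniform_weights hk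
  refine ⟨hZ0, hZ1, fun x => ?_⟩
  refine (mean_log_le_log_powerMean hk _ (fun i => hpos i x) hr0).trans
    (Real.log_le_log (hMpos x) ?_)
  exact le_div_self (hMpos x).le hZ0 hZ1
end

section
/- (Wisdom of Crowds on log-likelihood, finite classification setting.) Let L ≥ 1, k ≥ 1, and let p⁽¹⁾, …, p⁽ᵏ⁾ : Fin L → ℝ be strictly positive probability vectors, i.e. p⁽ⁱ⁾(y) > 0 for all y and Σ_{y=1}^L p⁽ⁱ⁾(y) = 1 for each i. Let r be a real number with 0 < r ≤ 1, and define M(y) = ((1/k) · Σ_{i=1}^k p⁽ⁱ⁾(y)^r)^{1/r} and Z = Σ_{y=1}^L M(y). Then for every class y: log(M(y)/Z) ≥ (1/k) · Σ_{i=1}^k log p⁽ⁱ⁾(y). -/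
/-!
Write `M z` for the power mean of order `r` at class `z`, and `Z = ∑ z, M z`. Since `1 ≤ 1 / r`,
convexity of `x ↦ x ^ (1 / r)` bounds `M z` by the arithmetic mean of the `p i z`; summing over `z` gives
`Z ≤ 1`, so normalizing can only increase the mean. On the other hand, concavity of `log` applied
to the numbers `p i y ^ r` shows that `log (M y)` is at least the average of the `log (p i y)`.
-/

open Real

/-- Wisdom of Crowds on log-likelihood in the finite classification setting: for
`0 < r ≤ 1`, the log of the normalized generalized power mean of `k` strictly positive
probability vectors dominates the average individual log-likelihood at every class. -/
theorem wisdom_of_crowds_classification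
    (L k : ℕ) (hL : 1 ≤ L) (hk : 1 ≤ k)
    (p : Fin k → Fin L → ℝ)
    (hpos : ∀ i y, 0 < p i y)
    (hsum : ∀ i, (∑ y, p i y) = 1)
    (r : ℝ) (hr0 : 0 < r) (hr1 : r ≤ 1) (y : Fin L) :
    Real.log ((((1 / (k : ℝ)) * ∑ i, p i y ^ r) ^ (1 / r)) /
        (∑ z, ((1 / (k : ℝ)) * ∑ i, p i z ^ r) ^ (1 / r)))
      ≥ (1 / (k : ℝ)) * ∑ i, Real.log (p i y) := by
  have hk0 : (0 : ℝ) < k := by exact_mod_cast hk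
  have : Nonempty (Fin k) := ⟨⟨0, hk⟩⟩
  have hw : ∀ i ∈ (Finset.univ : Finset (Fin k)), (0 : ℝ) ≤ 1 / (k : ℝ) :=
    fun _ _ => by positivity
  have hw1 : ∑ _i : Fin k, (1 / (k : ℝ)) = 1 := by
    simp [hk0.ne']
  have hmean : ∀ z, 0 < (1 / (k : ℝ)) * ∑ i, p i z ^ r := fun z =>
    mul_pos (by positivity)
      (Finset.sum_pos (fun i _ => rpow_pos_of_pos (hpos i z) r) Finset.univ_nonempty)
  have hM : ∀ z, 0 < ((1 / (k : ℝ)) * ∑ i, p i z ^ r) ^ (1 / r) := fun z =>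
    rpow_pos_of_pos (hmean z) _
  have hMle : ∀ z, ((1 / (k : ℝ)) * ∑ i, p i z ^ r) ^ (1 / r) ≤ ∑ i, (1 / (k : ℝ)) * p i z := by
    intro z
    have h := Real.rpow_arith_mean_le_arith_mean_rpow Finset.univ (fun _ : Fin k => 1 / (k : ℝ))
      (fun i => p i z ^ r) hw hw1 (fun i _ => (rpow_pos_of_pos (hpos i z) r).le)
      ((one_le_div hr0).2 hr1)
    rw [Finset.mul_sum]
    refine h.trans_eq (Finset.sum_congr rfl fun i _ => ?_)
    rw [← rpow_mul (hpos i z).le, mul_one_div_cancel hr0.ne', rpow_one]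
  have hZ : ∑ z, ((1 / (k : ℝ)) * ∑ i, p i z ^ r) ^ (1 / r) ≤ 1 := by
    refine (Finset.sum_le_sum fun z _ => hMle z).trans_eq ?_
    rw [Finset.sum_comm]
    simp only [← Finset.mul_sum, hsum]
    simp [hk0.ne']
  have hZ0 : 0 < ∑ z, ((1 / (k : ℝ)) * ∑ i, p i z ^ r) ^ (1 / r) :=
    Finset.sum_pos (fun z _ => hM z) ⟨y, Finset.mem_univ y⟩
  have hlog : (1 / (k : ℝ)) * ∑ i, Real.log (p i y) ≤
      Real.log (((1 / (k : ℝ)) * ∑ i, p i y ^ r) ^ (1 / r)) := by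
    have h := strictConcaveOn_log_Ioi.concaveOn.le_map_sum (t := Finset.univ)
      (w := fun _ : Fin k => 1 / (k : ℝ)) (p := fun i => p i y ^ r) hw hw1
      (fun i _ => rpow_pos_of_pos (hpos i y) r)
    simp only [smul_eq_mul, ← Finset.mul_sum] at h
    simp only [log_rpow (hpos _ y), ← Finset.mul_sum] at h
    rw [log_rpow (hmean y), one_div_mul_eq_div r, le_div_iff₀ hr0]
    linarith
  rw [ge_iff_le, log_div (hM y).ne' hZ0.ne']
  linarith [log_nonpos hZ0.le hZ]
end

section
/- (Failure of the Wisdom of Crowds.) For every real number r with r < 0 or r > 1, there exist two strictly positive probability densities p⁽¹⁾ ≠ p⁽²⁾ on ℝ (measurable, strictly positive, each integrating to 1 with respect to Lebesgue measure) and a point x ∈ ℝ such that log(M_{2,r}(x)/Z_{2,r}) < (1/2) · (log p⁽¹⁾(x) + log p⁽²⁾(x)), where M_{2,r}(x) = ((1/2)(p⁽¹⁾(x)^r + p⁽²⁾(x)^r))^{1/r} and Z_{2,r} = ∫_ℝ M_{2,r}(x) dx. -/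
/-!
Both densities are perturbations `g (1 + a s)` and `g (1 - a s)` of the standard Gaussian density
`g`, where `s` is the odd step function equal to `1` on `[1, 2]`, `-1` on `[-2, -1]` and `0`
elsewhere, and `0 < a < 1`.  Their power mean is `g` off the support `S` of `s` and `c g` on `S`,
where `c` is the power mean of `1 + a` and `1 - a`; hence `Z = 1 + (c - 1) m`, where `m ∈ (0, 1)` is
the Gaussian mass of `S`.

* If `r > 1`, strict convexity gives `c > 1`, so `Z > 1`, and the inequality holds at `x = 0`, where
  both densities and their power mean agree.
* If `r < 0`, then `Z ≥ 1 - m` for every `a`, while `c` is at most a constant times `1 - a`.  At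
  `x = 1` the inequality reads `c / Z < √(1 - a ^ 2)`, which holds once `a` is close enough to `1`.
-/

open MeasureTheory Real

namespace WisdomOfCrowds

/-- The standard Gaussian density. -/
noncomputable def g : ℝ → ℝ := ProbabilityTheory.gaussianPDFReal 0 1

/-- The support of the perturbation: `[-2, -1] ∪ [1, 2]`. -/
def S : Set ℝ := Set.Icc 1 2 ∪ Set.Icc (-2) (-1)

/-- The odd step function `1_{[1, 2]} - 1_{[-2, -1]}`. -/
noncomputable def s (x : ℝ) : ℝ :=
  (Set.Icc (1 : ℝ) 2).indicator 1 x - (Set.Icc (-2 : ℝ) (-1)).indicator 1 x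

/-- The perturbed Gaussian density `g (1 + a s)`. -/
noncomputable def dens (a x : ℝ) : ℝ := g x * (1 + a * s x)

/-- The Gaussian mass of `S`. -/
noncomputable def mass : ℝ := ∫ x in S, g x

/-- The power mean of order `r` of `1 + a` and `1 - a`. -/
noncomputable def c (r a : ℝ) : ℝ := ((1 / 2) * ((1 + a) ^ r + (1 - a) ^ r)) ^ (1 / r)

lemma g_pos (x : ℝ) : 0 < g x := ProbabilityTheory.gaussianPDFReal_pos 0 1 x one_ne_zero

lemma g_int : Integrable g := ProbabilityTheory.integrable_gaussianPDFReal 0 1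

lemma g_integral : ∫ x, g x = 1 :=
  ProbabilityTheory.integral_gaussianPDFReal_eq_one 0 one_ne_zero

lemma g_neg (x : ℝ) : g (-x) = g x := by
  simp [g, ProbabilityTheory.gaussianPDFReal]

lemma measurableSet_S : MeasurableSet S := measurableSet_Icc.union measurableSet_Icc

lemma s_measurable : Measurable s :=
  (measurable_one.indicator measurableSet_Icc).sub (measurable_one.indicator measurableSet_Icc)

lemma s_neg (x : ℝ) : s (-x) = -s x := by
  have h1 : -x ∈ Set.Icc (1 : ℝ) 2 ↔ x ∈ Set.Icc (-2 : ℝ) (-1) := by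
    simp only [Set.mem_Icc]
    constructor <;> rintro ⟨h, h'⟩ <;> constructor <;> linarith
  have h2 : -x ∈ Set.Icc (-2 : ℝ) (-1) ↔ x ∈ Set.Icc (1 : ℝ) 2 := by
    simp only [Set.mem_Icc]
    constructor <;> rintro ⟨h, h'⟩ <;> constructor <;> linarith
  simp only [s, Set.indicator_apply, h1, h2, Pi.one_apply]
  ring

lemma s_cases (x : ℝ) : (x ∈ S ∧ (s x = 1 ∨ s x = -1)) ∨ (x ∉ S ∧ s x = 0) := by
  by_cases h1 : x ∈ Set.Icc (1 : ℝ) 2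
  · have h2 : x ∉ Set.Icc (-2 : ℝ) (-1) := fun h => by linarith [h1.1, h.2]
    exact Or.inl ⟨Or.inl h1, Or.inl (by simp [s, h1, h2, -Set.mem_Icc])⟩
  · by_cases h2 : x ∈ Set.Icc (-2 : ℝ) (-1)
    · exact Or.inl ⟨Or.inr h2, Or.inr (by simp [s, h1, h2, -Set.mem_Icc])⟩
    · exact Or.inr ⟨fun h => h.elim h1 h2, by simp [s, h1, h2, -Set.mem_Icc]⟩

lemma s_zero : s 0 = 0 := by norm_num [s, Set.indicator_apply]

lemma s_one : s 1 = 1 := by norm_num [s, Set.indicator_apply]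

lemma dens_measurable (a : ℝ) : Measurable (dens a) :=
  (ProbabilityTheory.measurable_gaussianPDFReal 0 1).mul
    (measurable_const.add (s_measurable.const_mul a))

lemma dens_pos {a : ℝ} (ha : |a| < 1) (x : ℝ) : 0 < dens a x := by
  rw [abs_lt] at ha
  refine mul_pos (g_pos x) ?_
  rcases s_cases x with ⟨-, h | h⟩ | ⟨-, h⟩ <;> rw [h] <;> linarith

lemma dens_integral (a : ℝ) : ∫ x, dens a x = 1 := by
  have hi : Integrable fun x => g x * s x := by
    refine g_int.mul_bdd (c := 1) s_measurable.aestronglyMeasurable (.of_forall fun x => ?_)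
    rcases s_cases x with ⟨-, h | h⟩ | ⟨-, h⟩ <;> simp [h]
  have hodd : ∫ x, g x * s x = 0 := by
    have h := integral_neg_eq_self (fun x => g x * s x) volume
    simp only [g_neg, s_neg, mul_neg, integral_neg] at h
    linarith
  have he : dens a = fun x => g x + a * (g x * s x) := by
    funext x
    simp only [dens]
    ring
  rw [he, integral_add g_int (hi.const_mul a), integral_const_mul, hodd, g_integral]
  simp

lemma mass_pos : 0 < mass := by
  refine (setIntegral_pos_iff_support_of_nonneg_ae (.of_forall fun x => (g_pos x).le)
    g_int.integrableOn).2 ?_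
  have : Function.support g = Set.univ := Set.eq_univ_of_forall fun x => (g_pos x).ne'
  rw [this, Set.univ_inter]
  exact lt_of_lt_of_le (by simp) (measure_mono (Set.subset_union_left : Set.Icc (1 : ℝ) 2 ⊆ S))

lemma mass_lt_one : mass < 1 := by
  have hc : 0 < ∫ x in Sᶜ, g x := by
    refine (setIntegral_pos_iff_support_of_nonneg_ae (.of_forall fun x => (g_pos x).le)
      g_int.integrableOn).2 ?_
    have : Function.support g = Set.univ := Set.eq_univ_of_forall fun x => (g_pos x).ne'
    rw [this, Set.univ_inter]
    have hsub : Set.Ioo (0 : ℝ) 1 ⊆ Sᶜ := by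
      rintro x ⟨h0, h1⟩ (h | h)
      · linarith [h.1]
      · linarith [h.2]
    exact lt_of_lt_of_le (by simp) (measure_mono hsub)
  have h := integral_add_compl measurableSet_S g_int
  rw [g_integral] at h
  unfold mass
  linarith

/-- Homogeneity of the power mean, applied to the two densities. -/
lemma powerMean_dens {r a : ℝ} (hr : r ≠ 0) (ha : |a| < 1) (x : ℝ) :
    ((1 / 2) * (dens a x ^ r + dens (-a) x ^ r)) ^ (1 / r) = g x * c r (a * s x) := by
  have hg := g_pos x
  have h1 : 0 < 1 + a * s x := (mul_pos_iff_of_pos_left hg).1 (dens_pos ha x)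
  have h2 : 0 < 1 + -a * s x :=
    (mul_pos_iff_of_pos_left hg).1 (dens_pos (by rwa [abs_neg]) x)
  rw [dens, dens, mul_rpow hg.le h1.le, mul_rpow hg.le h2.le, ← mul_add, mul_left_comm,
    mul_rpow (by positivity) (by positivity), ← rpow_mul hg.le, mul_one_div_cancel hr, rpow_one, c]
  ring_nf

lemma c_zero (r : ℝ) : c r 0 = 1 := by norm_num [c]

lemma c_neg (r a : ℝ) : c r (-a) = c r a := by
  simp only [c]
  rw [sub_neg_eq_add, ← sub_eq_add_neg, add_comm ((1 - a) ^ r)]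

lemma c_pos {r a : ℝ} (ha : |a| < 1) : 0 < c r a := by
  rw [abs_lt] at ha
  have h1 : 0 < 1 + a := by linarith
  have h2 : 0 < 1 - a := by linarith
  unfold c
  positivity

lemma normalization {r a : ℝ} (hr : r ≠ 0) (ha : |a| < 1) :
    ∫ y, ((1 / 2) * (dens a y ^ r + dens (-a) y ^ r)) ^ (1 / r) = 1 + (c r a - 1) * mass := by
  have h : ∀ y, ((1 / 2) * (dens a y ^ r + dens (-a) y ^ r)) ^ (1 / r)
      = g y + (c r a - 1) * S.indicator g y := by
    intro y
    rw [powerMean_dens hr ha]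
    rcases s_cases y with ⟨hS, h | h⟩ | ⟨hS, h⟩
    · rw [h, Set.indicator_of_mem hS, mul_one]
      ring
    · rw [h, Set.indicator_of_mem hS, mul_neg_one, c_neg]
      ring
    · rw [h, Set.indicator_of_notMem hS, mul_zero, c_zero]
      ring
  simp_rw [h]
  rw [integral_add g_int ((g_int.indicator measurableSet_S).const_mul _), integral_const_mul,
    integral_indicator measurableSet_S, g_integral, mass]

lemma dens_ne {a : ℝ} (ha : 0 < a) : dens a ≠ dens (-a) := by
  intro h
  have h1 := mul_left_cancel₀ (g_pos 1).ne' (congrFun h 1)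
  rw [s_one] at h1
  linarith

lemma one_lt_c {r : ℝ} (hr : 1 < r) : 1 < c r (1 / 2) := by
  have h : ((1 / 2 : ℝ) * (1 + 1 / 2) + 1 / 2 * (1 - 1 / 2)) ^ r
      < 1 / 2 * (1 + 1 / 2) ^ r + 1 / 2 * (1 - 1 / 2) ^ r :=
    (strictConvexOn_rpow hr).2 (Set.mem_Ici.2 (by norm_num)) (Set.mem_Ici.2 (by norm_num))
      (by norm_num) (by norm_num) (by norm_num) (by norm_num)
  have h1 : (1 / 2 : ℝ) * (1 + 1 / 2) + 1 / 2 * (1 - 1 / 2) = 1 := by norm_num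
  rw [h1, one_rpow, ← mul_add] at h
  exact one_lt_rpow h (by positivity)

/-- For negative orders the power mean is controlled by the smaller of its arguments. -/
lemma c_le {r a : ℝ} (hr : r < 0) (ha : |a| < 1) :
    c r a ≤ (1 / 2 : ℝ) ^ (1 / r) * (1 - a) := by
  rw [abs_lt] at ha
  have h1 : 0 < 1 + a := by linarith
  have h2 : 0 < 1 - a := by linarith
  have h3 : 0 < (1 + a) ^ r := rpow_pos_of_pos h1 r
  calc c r a ≤ ((1 / 2) * (1 - a) ^ r) ^ (1 / r) :=
        rpow_le_rpow_of_nonpos (by positivity) (by linarith)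
          (one_div_neg.2 hr).le
    _ = (1 / 2 : ℝ) ^ (1 / r) * (1 - a) := by
        rw [mul_rpow (by norm_num) (by positivity), ← rpow_mul h2.le,
          mul_one_div_cancel hr.ne, rpow_one]

lemma exists_c_lt {r : ℝ} (hr : r < 0) :
    ∃ a : ℝ, 0 < a ∧ a < 1 ∧ c r a < (1 - mass) * √((1 + a) * (1 - a)) := by
  set K : ℝ := (1 / 2 : ℝ) ^ (1 / r) with hK
  have hK0 : 0 < K := by positivity
  set q : ℝ := 1 - mass with hq
  have hq0 : 0 < q := by linarith [mass_lt_one]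
  have hq1 : q < 1 := by linarith [mass_pos]
  -- With `d = 1 - a`, the bound `K d < q √(d (2 - d))` follows from `K ^ 2 d < q ^ 2` and `d < 1`.
  obtain ⟨d, hd⟩ : ∃ d, d = q ^ 2 / (K ^ 2 + 1) := ⟨_, rfl⟩
  have hd0 : 0 < d := by rw [hd]; positivity
  have hdm : d * (K ^ 2 + 1) = q ^ 2 := by rw [hd]; field_simp
  have hd1 : d < 1 := by nlinarith [mul_pos hd0 (pow_pos hK0 2)]
  refine ⟨1 - d, by linarith, by linarith, ?_⟩
  refine (c_le hr (by rw [abs_lt]; constructor <;> linarith)).trans_lt ?_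
  have hsq : K * d / q < √((1 + (1 - d)) * (1 - (1 - d))) := by
    refine lt_sqrt_of_sq_lt ?_
    rw [div_pow, div_lt_iff₀ (by positivity)]
    have h1 : K ^ 2 * d < q ^ 2 := by linarith
    have h2 : q ^ 2 ≤ q ^ 2 * (2 - d) := by nlinarith [pow_pos hq0 2]
    nlinarith [mul_lt_mul_of_pos_right (h1.trans_le h2) hd0]
  rw [div_lt_iff₀ hq0] at hsq
  rw [sub_sub_cancel 1 d] at hsq ⊢
  linarith

end WisdomOfCrowds

open WisdomOfCrowds in
/-- Failure of the Wisdom of Crowds: for every order `r ∉ [0,1]` there exist two distinct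
strictly positive probability densities on `ℝ` and a point where the log of the normalized
power mean density falls strictly below the average individual log-likelihood. -/
theorem failure_of_wisdom_of_crowds
    (r : ℝ) (hr : r < 0 ∨ 1 < r) :
    ∃ p₁ p₂ : ℝ → ℝ,
      Measurable p₁ ∧ Measurable p₂ ∧
      (∀ x, 0 < p₁ x) ∧ (∀ x, 0 < p₂ x) ∧
      (∫ x, p₁ x) = 1 ∧ (∫ x, p₂ x) = 1 ∧
      p₁ ≠ p₂ ∧
      ∃ x : ℝ,
        Real.log ((((1 / 2) * (p₁ x ^ r + p₂ x ^ r)) ^ (1 / r)) /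
            (∫ y, ((1 / 2) * (p₁ y ^ r + p₂ y ^ r)) ^ (1 / r)))
          < (1 / 2) * (Real.log (p₁ x) + Real.log (p₂ x)) := by
  have hm0 := mass_pos
  have hm1 := mass_lt_one
  rcases hr with hr | hr
  · obtain ⟨a, ha0, ha1, hc⟩ := exists_c_lt hr
    have ha : |a| < 1 := by rwa [abs_of_pos ha0]
    have ha' : |-a| < 1 := by rwa [abs_neg]
    refine ⟨dens a, dens (-a), dens_measurable _, dens_measurable _, dens_pos ha, dens_pos ha',
      dens_integral _, dens_integral _, dens_ne ha0, 1, ?_⟩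
    have hg := g_pos 1
    have hcp : 0 < c r a := c_pos ha
    have h1 : 0 < 1 + a := by linarith
    have h2 : 0 < 1 - a := by linarith
    have hprod : 0 < (1 + a) * (1 - a) := mul_pos h1 h2
    have hZ : 1 - mass < 1 + (c r a - 1) * mass := by nlinarith [mul_pos hcp hm0]
    have hZ0 : 0 < 1 + (c r a - 1) * mass := by linarith
    rw [normalization hr.ne ha, powerMean_dens hr.ne ha, s_one, mul_one]
    have hrhs : (1 / 2) * (log (dens a 1) + log (dens (-a) 1))
        = log (g 1 * √((1 + a) * (1 - a))) := by
      rw [dens, dens, s_one, mul_one, mul_one, ← sub_eq_add_neg, log_mul hg.ne' h1.ne',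
        log_mul hg.ne' h2.ne', log_mul hg.ne' (sqrt_pos.2 hprod).ne', log_sqrt hprod.le,
        log_mul h1.ne' h2.ne']
      ring
    rw [hrhs]
    refine log_lt_log (by positivity) ?_
    rw [mul_div_assoc]
    refine mul_lt_mul_of_pos_left ?_ hg
    rw [div_lt_iff₀ hZ0]
    nlinarith [mul_lt_mul_of_pos_right hZ (sqrt_pos.2 hprod)]
  · have hr0 : r ≠ 0 := by linarith
    have ha : |(1 / 2 : ℝ)| < 1 := by norm_num [abs_lt]
    have ha' : |-(1 / 2 : ℝ)| < 1 := by rwa [abs_neg]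
    refine ⟨dens (1 / 2), dens (-(1 / 2)), dens_measurable _, dens_measurable _, dens_pos ha,
      dens_pos ha', dens_integral _, dens_integral _, dens_ne (by norm_num), 0, ?_⟩
    have hg := g_pos 0
    have hZ : 1 < 1 + (c r (1 / 2) - 1) * mass := by
      linarith [mul_pos (sub_pos.2 (one_lt_c hr)) hm0]
    rw [normalization hr0 ha, powerMean_dens hr0 ha, s_zero, mul_zero, c_zero, mul_one]
    have hrhs : ∀ b, dens b 0 = g 0 := fun b => by simp [dens, s_zero]
    rw [hrhs, hrhs, ← two_mul, ← mul_assoc, one_div_mul_cancel two_ne_zero, one_mul]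
    exact log_lt_log (by positivity) (div_lt_self hg hZ)
end

section
/- For each fixed real number r < 0, the function m ↦ (1/r) · log((1/2) · (1 + exp(−2·r·m²))) + m² tends to −∞ as m → +∞. -/
open Real Filter

/-- For each fixed `r < 0`, the gap
`(1/r) · log((1/2)(1 + exp(-2·r·m²))) + m²` tends to `-∞` as `m → +∞`. -/
theorem gap_tendsto_atBot (r : ℝ) (hr : r < 0) :
    Tendsto (fun m : ℝ => (1 / r) * Real.log ((1 / 2) * (1 + Real.exp (-2 * r * m ^ 2))) + m ^ 2)
      atTop atBot := by
  -- Dropping the `1` inside the logarithm bounds the gap above by `(1/r) log (1/2) - m²`.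
  have hlim : Tendsto (fun m : ℝ => (1 / r) * Real.log (1 / 2) + -(m ^ 2)) atTop atBot :=
    tendsto_atBot_add_const_left _ _
      (tendsto_neg_atTop_atBot.comp (tendsto_pow_atTop two_ne_zero))
  refine tendsto_atBot_mono (fun m => ?_) hlim
  have hlog : Real.log (1 / 2) + -2 * r * m ^ 2
      ≤ Real.log ((1 / 2) * (1 + Real.exp (-2 * r * m ^ 2))) := by
    rw [Real.log_mul (by norm_num) (by positivity)]
    have h : Real.log (Real.exp (-2 * r * m ^ 2)) ≤ Real.log (1 + Real.exp (-2 * r * m ^ 2)) :=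
      Real.log_le_log (Real.exp_pos _) (by linarith)
    rw [Real.log_exp] at h
    linarith
  have hmul := mul_le_mul_of_nonpos_left hlog (one_div_neg.mpr hr).le
  have hcancel : (1 / r) * (Real.log (1 / 2) + -2 * r * m ^ 2)
      = (1 / r) * Real.log (1 / 2) - 2 * m ^ 2 := by
    have := hr.ne
    field_simp
    ring
  linarith
end

section
/- (Closed form of the normalization constant for order r = 1/n with Gaussians.) Let d ≥ 1, k ≥ 1, n ≥ 1 be integers, let μ₁, …, μ_k ∈ ℝ^d and let Σ₁, …, Σ_k be symmetric positive definite d×d real matrices, with p⁽ⁱ⁾(x) = (2π)^{−d/2} · det(Σ_i)^{−1/2} · exp(−(1/2)·(x−μ_i)ᵀ Σ_i⁻¹ (x−μ_i)). For weights w₁, …, w_k ≥ 0 with Σ w_i = 1, define Q_w = Σ_i w_i Σ_i⁻¹, b_w = Σ_i w_i Σ_i⁻¹ μ_i, c_w = Σ_i w_i μ_iᵀ Σ_i⁻¹ μ_i, and F(w) = (2π)^{d/2} · det(Q_w)^{−1/2} · (∏_i (2π)^{−d·w_i/2} · det(Σ_i)^{−w_i/2}) · exp((1/2)·b_wᵀ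 Q_w⁻¹ b_w − (1/2)·c_w). Then ∫_{ℝ^d} ((1/k) · Σ_{i=1}^k p⁽ⁱ⁾(x)^{1/n})^n dx = (1/kⁿ) · Σ_{(n₁,…,n_k) ∈ ℕᵏ, n₁+⋯+n_k = n} (n! / (n₁!⋯n_k!)) · F(n₁/n, …, n_k/n). -/
/-! Expanding the `n`-th power by the multinomial theorem turns the integrand into a finite
combination of weighted geometric means `∏ i, p i x ^ (v i / n)` of the densities, so the identity
reduces to showing that each of these is integrable with integral `F (v / n)`. The exponent of a
weighted geometric mean is the quadratic polynomial `x ⬝ᵥ Q *ᵥ x - 2 * (b ⬝ᵥ x) + c`, where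
`Q = ∑ i, w i • (S i)⁻¹` is positive definite (`posDef_weighted_sum`). Completing the square at
`Q⁻¹ *ᵥ b` leaves a centred Gaussian integral, which is computed in `gaussian_posDef` by factoring
`Q = Bᵀ * B` and substituting `y = B *ᵥ x`. -/

open MeasureTheory Real Matrix

lemma gaussian_standard (d : ℕ) :
    Integrable (fun y : Fin d → ℝ => Real.exp (-(1 / 2) * (y ⬝ᵥ y))) ∧
      ∫ y : Fin d → ℝ, Real.exp (-(1 / 2) * (y ⬝ᵥ y)) = (2 * π) ^ ((d : ℝ) / 2) := by
  have h : (fun y : Fin d → ℝ => Real.exp (-(1 / 2) * (y ⬝ᵥ y))) =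
      fun y => ∏ i, Real.exp (-(1 / 2) * y i ^ 2) := by
    funext y
    rw [← Real.exp_sum, ← Finset.mul_sum]
    simp only [dotProduct, sq]
  rw [h]
  constructor
  · exact Integrable.fintype_prod (f := fun _ (v : ℝ) => Real.exp (-(1 / 2) * v ^ 2))
      (fun _ => integrable_exp_neg_mul_sq (by norm_num))
  · rw [integral_fintype_prod_volume_eq_pow (fun v : ℝ => Real.exp (-(1 / 2) * v ^ 2)),
      integral_gaussian, Fintype.card_fin, Real.sqrt_eq_rpow, ← Real.rpow_mul_natCast (by positivity)]
    congr 1 <;> ring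

/-- The centred Gaussian integral with precision matrix `Q`. -/
lemma gaussian_posDef {d : ℕ} {Q : Matrix (Fin d) (Fin d) ℝ} (hQ : Q.PosDef) :
    Integrable (fun x : Fin d → ℝ => Real.exp (-(1 / 2) * (x ⬝ᵥ (Q *ᵥ x)))) ∧
      ∫ x : Fin d → ℝ, Real.exp (-(1 / 2) * (x ⬝ᵥ (Q *ᵥ x))) =
        (2 * π) ^ ((d : ℝ) / 2) * Q.det ^ (-(1 : ℝ) / 2) := by
  obtain ⟨B, hB⟩ : ∃ B : Matrix (Fin d) (Fin d) ℝ, Q = Bᵀ * B := by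
    open scoped MatrixOrder ComplexOrder in
    exact CStarAlgebra.nonneg_iff_eq_star_mul_self.mp hQ.posSemidef.nonneg
  have hdet : Q.det = B.det ^ 2 := by rw [hB, det_mul, det_transpose, sq]
  have hB0 : B.det ≠ 0 := by
    intro h0
    have := hQ.det_pos
    simp [hdet, h0] at this
  have hq : ∀ x : Fin d → ℝ, x ⬝ᵥ (Q *ᵥ x) = toLin' B x ⬝ᵥ toLin' B x := by
    intro x
    rw [hB, toLin'_apply, ← mulVec_mulVec, dotProduct_mulVec, vecMul_transpose]
  simp only [hq]
  obtain ⟨hi, hI⟩ := gaussian_standard d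
  have hmap := Real.map_matrix_volume_pi_eq_smul_volume_pi hB0
  have hL : AEMeasurable (toLin' B) (volume : Measure (Fin d → ℝ)) :=
    (LinearMap.continuous_of_finiteDimensional (toLin' B)).aemeasurable
  have hg : AEStronglyMeasurable (fun y : Fin d → ℝ => Real.exp (-(1 / 2) * (y ⬝ᵥ y)))
      (Measure.map (toLin' B) volume) := by
    rw [hmap]
    exact hi.aestronglyMeasurable.smul_measure _
  constructor
  · refine (integrable_map_measure hg hL).mp ?_
    rw [hmap]
    exact hi.smul_measure ENNReal.ofReal_ne_top
  · have := integral_map hL hg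
    rw [hmap, integral_smul_measure, hI, ENNReal.toReal_ofReal (abs_nonneg _)] at this
    rw [← this, hdet, smul_eq_mul, mul_comm, ← sq_abs, ← Real.rpow_natCast,
      ← Real.rpow_mul (abs_nonneg _), abs_inv, ← Real.rpow_neg_one]
    norm_num

/-- The Gaussian integral with a linear term, by completing the square at `Q⁻¹ *ᵥ b`. -/
lemma gaussian_affine {d : ℕ} {Q : Matrix (Fin d) (Fin d) ℝ} (hQ : Q.PosDef) (b : Fin d → ℝ)
    (c : ℝ) :
    Integrable (fun x : Fin d → ℝ =>
        Real.exp (-(1 / 2) * (x ⬝ᵥ (Q *ᵥ x) - 2 * (b ⬝ᵥ x) + c))) ∧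
      ∫ x : Fin d → ℝ, Real.exp (-(1 / 2) * (x ⬝ᵥ (Q *ᵥ x) - 2 * (b ⬝ᵥ x) + c)) =
        (2 * π) ^ ((d : ℝ) / 2) * Q.det ^ (-(1 : ℝ) / 2) *
          Real.exp ((1 / 2) * (b ⬝ᵥ (Q⁻¹ *ᵥ b)) - (1 / 2) * c) := by
  have hQm : Q *ᵥ (Q⁻¹ *ᵥ b) = b := by
    rw [mulVec_mulVec, mul_nonsing_inv _ ((isUnit_iff_isUnit_det Q).mp hQ.isUnit), one_mulVec]
  have hT : Qᵀ = Q := by simpa using hQ.isHermitian.eq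
  have hsym : ∀ y z : Fin d → ℝ, y ⬝ᵥ (Q *ᵥ z) = (Q *ᵥ y) ⬝ᵥ z := by
    intro y z
    rw [dotProduct_mulVec, ← mulVec_transpose, hT]
  have h : (fun x : Fin d → ℝ => Real.exp (-(1 / 2) * (x ⬝ᵥ (Q *ᵥ x) - 2 * (b ⬝ᵥ x) + c))) =
      fun x => Real.exp (-(1 / 2) * ((x - Q⁻¹ *ᵥ b) ⬝ᵥ (Q *ᵥ (x - Q⁻¹ *ᵥ b)))) *
        Real.exp ((1 / 2) * (b ⬝ᵥ (Q⁻¹ *ᵥ b)) - (1 / 2) * c) := by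
    funext x
    rw [← Real.exp_add, mulVec_sub, hQm, sub_dotProduct, dotProduct_sub, dotProduct_sub,
      hsym (Q⁻¹ *ᵥ b) x, hQm, dotProduct_comm x b, dotProduct_comm (Q⁻¹ *ᵥ b) b]
    congr 1
    ring
  obtain ⟨hi, hI⟩ := gaussian_posDef hQ
  rw [h]
  refine ⟨(hi.comp_sub_right (Q⁻¹ *ᵥ b)).mul_const _, ?_⟩
  rw [integral_mul_const, ← hI]
  congr 1
  exact integral_sub_right_eq_self
    (fun x : Fin d → ℝ => Real.exp (-(1 / 2) * (x ⬝ᵥ (Q *ᵥ x)))) (Q⁻¹ *ᵥ b)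

lemma posDef_weighted_sum {d k : ℕ} {S : Fin k → Matrix (Fin d) (Fin d) ℝ}
    (hS : ∀ i, (S i).PosDef) {w : Fin k → ℝ} (hw : ∀ i, 0 ≤ w i) (hw1 : ∑ i, w i = 1) :
    (∑ i, w i • (S i)⁻¹).PosDef := by
  obtain ⟨j, -, hj⟩ : ∃ j ∈ Finset.univ, w j ≠ 0 :=
    Finset.exists_ne_zero_of_sum_ne_zero (by rw [hw1]; exact one_ne_zero)
  rw [← Finset.add_sum_erase _ _ (Finset.mem_univ j)]
  exact ((hS j).inv.smul ((hw j).lt_of_ne' hj)).add_posSemidef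
    (posSemidef_sum _ fun i _ => (hS i).inv.posSemidef.smul (hw i))

lemma quadratic_form_expand {d k : ℕ} {S : Fin k → Matrix (Fin d) (Fin d) ℝ}
    (hS : ∀ i, (S i).PosDef) (μ : Fin k → (Fin d → ℝ)) (w : Fin k → ℝ) (x : Fin d → ℝ) :
    ∑ i, w i * ((x - μ i) ⬝ᵥ ((S i)⁻¹ *ᵥ (x - μ i))) =
      x ⬝ᵥ ((∑ i, w i • (S i)⁻¹) *ᵥ x) - 2 * ((∑ i, w i • ((S i)⁻¹ *ᵥ μ i)) ⬝ᵥ x)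
        + ∑ i, w i * (μ i ⬝ᵥ ((S i)⁻¹ *ᵥ μ i)) := by
  have hsym : ∀ i, μ i ⬝ᵥ ((S i)⁻¹ *ᵥ x) = ((S i)⁻¹ *ᵥ μ i) ⬝ᵥ x := by
    intro i
    have hT : ((S i)⁻¹)ᵀ = (S i)⁻¹ := by simpa using (hS i).inv.isHermitian.eq
    rw [dotProduct_mulVec, ← mulVec_transpose, hT]
  rw [sum_mulVec, dotProduct_sum, sum_dotProduct, Finset.mul_sum, ← Finset.sum_sub_distrib,
    ← Finset.sum_add_distrib]
  refine Finset.sum_congr rfl fun i _ => ?_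
  rw [mulVec_sub, sub_dotProduct, dotProduct_sub, dotProduct_sub, hsym, smul_mulVec,
    dotProduct_smul, smul_dotProduct, dotProduct_comm x ((S i)⁻¹ *ᵥ μ i)]
  simp only [smul_eq_mul]
  ring

/-- The weighted geometric mean of Gaussian densities is an unnormalized Gaussian; the right-hand
side is the quantity called `F w` in `normalization_constant_closed_form_one_over_n`. -/
lemma geometric_mean_gaussian {d k : ℕ} {S : Fin k → Matrix (Fin d) (Fin d) ℝ}
    (hS : ∀ i, (S i).PosDef) (μ : Fin k → (Fin d → ℝ)) {w : Fin k → ℝ} (hw : ∀ i, 0 ≤ w i)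
    (hw1 : ∑ i, w i = 1) :
    Integrable (fun x : Fin d → ℝ =>
        ∏ i, ((2 * π) ^ (-(d : ℝ) / 2) * (S i).det ^ (-(1 : ℝ) / 2) *
            Real.exp (-(1 / 2) * ((x - μ i) ⬝ᵥ ((S i)⁻¹ *ᵥ (x - μ i))))) ^ w i) ∧
      ∫ x : Fin d → ℝ, ∏ i, ((2 * π) ^ (-(d : ℝ) / 2) * (S i).det ^ (-(1 : ℝ) / 2) *
            Real.exp (-(1 / 2) * ((x - μ i) ⬝ᵥ ((S i)⁻¹ *ᵥ (x - μ i))))) ^ w i =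
        (2 * π) ^ ((d : ℝ) / 2) * (∑ i, w i • (S i)⁻¹).det ^ (-(1 : ℝ) / 2) *
          (∏ i, (2 * π) ^ (-(d : ℝ) * w i / 2) * (S i).det ^ (-(w i) / 2)) *
          Real.exp ((1 / 2) *
              ((∑ i, w i • ((S i)⁻¹ *ᵥ μ i)) ⬝ᵥ
                ((∑ i, w i • (S i)⁻¹)⁻¹ *ᵥ (∑ i, w i • ((S i)⁻¹ *ᵥ μ i))))
            - (1 / 2) * ∑ i, w i * (μ i ⬝ᵥ ((S i)⁻¹ *ᵥ μ i))) := by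
  have h : (fun x : Fin d → ℝ =>
        ∏ i, ((2 * π) ^ (-(d : ℝ) / 2) * (S i).det ^ (-(1 : ℝ) / 2) *
            Real.exp (-(1 / 2) * ((x - μ i) ⬝ᵥ ((S i)⁻¹ *ᵥ (x - μ i))))) ^ w i) =
      fun x => (∏ i, (2 * π) ^ (-(d : ℝ) * w i / 2) * (S i).det ^ (-(w i) / 2)) *
        Real.exp (-(1 / 2) * (x ⬝ᵥ ((∑ i, w i • (S i)⁻¹) *ᵥ x)
          - 2 * ((∑ i, w i • ((S i)⁻¹ *ᵥ μ i)) ⬝ᵥ x)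
          + ∑ i, w i * (μ i ⬝ᵥ ((S i)⁻¹ *ᵥ μ i)))) := by
    funext x
    rw [← quadratic_form_expand hS, Finset.mul_sum, Real.exp_sum, ← Finset.prod_mul_distrib]
    refine Finset.prod_congr rfl fun i _ => ?_
    have hp : (0 : ℝ) ≤ 2 * π := by positivity
    have hdet : 0 ≤ (S i).det := (hS i).det_pos.le
    rw [Real.mul_rpow (by positivity) (by positivity), Real.mul_rpow (by positivity) (by positivity),
      ← Real.rpow_mul hp, ← Real.rpow_mul hdet, ← Real.exp_mul]
    congr 2
    · congr 1
      ring
    · congr 1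
      ring
    · ring
  obtain ⟨hi, hI⟩ := gaussian_affine (posDef_weighted_sum hS hw hw1)
    (∑ i, w i • ((S i)⁻¹ *ᵥ μ i)) (∑ i, w i * (μ i ⬝ᵥ ((S i)⁻¹ *ᵥ μ i)))
  rw [h]
  refine ⟨hi.const_mul _, ?_⟩
  rw [integral_const_mul, hI]
  ring



/-- Closed form of the normalization constant of the power mean of order `r = 1/n` of `k`
multivariate Gaussian densities, as a finite sum over multinomial coefficients of the
weighted-geometric-mean integrals `F(n₁/n, …, n_k/n)`. -/
theorem normalization_constant_closed_form_one_over_n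
    (d k n : ℕ) (hd : 1 ≤ d) (hk : 1 ≤ k) (hn : 1 ≤ n)
    (μ : Fin k → (Fin d → ℝ))
    (S : Fin k → Matrix (Fin d) (Fin d) ℝ)
    (hS : ∀ i, (S i).PosDef)
    (F : (Fin k → ℝ) → ℝ)
    (hF : ∀ w : Fin k → ℝ,
      F w = (2 * π) ^ ((d : ℝ) / 2) * (∑ i, w i • (S i)⁻¹).det ^ (-(1 : ℝ) / 2) *
          (∏ i, (2 * π) ^ (-(d : ℝ) * w i / 2) * (S i).det ^ (-(w i) / 2)) *
          Real.exp ((1 / 2) *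
              ((∑ i, w i • ((S i)⁻¹ *ᵥ μ i)) ⬝ᵥ
                ((∑ i, w i • (S i)⁻¹)⁻¹ *ᵥ (∑ i, w i • ((S i)⁻¹ *ᵥ μ i))))
            - (1 / 2) * ∑ i, w i * (μ i ⬝ᵥ ((S i)⁻¹ *ᵥ μ i)))) :
    (∫ x : Fin d → ℝ,
        ((1 / (k : ℝ)) * ∑ i, ((2 * π) ^ (-(d : ℝ) / 2) * (S i).det ^ (-(1 : ℝ) / 2) *
            Real.exp (-(1 / 2) * ((x - μ i) ⬝ᵥ ((S i)⁻¹ *ᵥ (x - μ i))))) ^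
              ((1 : ℝ) / (n : ℝ))) ^ (n : ℝ))
      = (1 / (k : ℝ) ^ n) *
          ∑ v ∈ Finset.piAntidiag (Finset.univ : Finset (Fin k)) n,
            ((Nat.factorial n : ℝ) / ∏ i, (Nat.factorial (v i) : ℝ)) *
              F (fun i => (v i : ℝ) / (n : ℝ)) := by
  have hn0 : (n : ℝ) ≠ 0 := by exact_mod_cast (show n ≠ 0 by omega)
  set p : Fin k → (Fin d → ℝ) → ℝ := fun i x =>
    (2 * π) ^ (-(d : ℝ) / 2) * (S i).det ^ (-(1 : ℝ) / 2) *
      Real.exp (-(1 / 2) * ((x - μ i) ⬝ᵥ ((S i)⁻¹ *ᵥ (x - μ i)))) with hp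
  have hp0 : ∀ i x, 0 ≤ p i x := by
    intro i x
    have := (hS i).det_pos.le
    simp only [hp]
    positivity
  have hmean : ∀ v ∈ Finset.piAntidiag (Finset.univ : Finset (Fin k)) n,
      Integrable (fun x : Fin d → ℝ => ∏ i, p i x ^ ((v i : ℝ) / n)) ∧
        ∫ x : Fin d → ℝ, ∏ i, p i x ^ ((v i : ℝ) / n) = F (fun i => (v i : ℝ) / n) := by
    intro v hv
    rw [hF]
    refine geometric_mean_gaussian hS μ (w := fun i => (v i : ℝ) / n) (fun i => by positivity) ?_
    rw [← Finset.sum_div, ← Nat.cast_sum, (Finset.mem_piAntidiag.mp hv).1, div_self hn0]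
  have hexpand : (fun x : Fin d → ℝ =>
      ((1 / (k : ℝ)) * ∑ i, p i x ^ ((1 : ℝ) / (n : ℝ))) ^ (n : ℝ)) =
      fun x => (1 / (k : ℝ) ^ n) *
        ∑ v ∈ Finset.piAntidiag (Finset.univ : Finset (Fin k)) n,
          ((Nat.factorial n : ℝ) / ∏ i, (Nat.factorial (v i) : ℝ)) *
            ∏ i, p i x ^ ((v i : ℝ) / n) := by
    funext x
    rw [Real.rpow_natCast, mul_pow, div_pow, one_pow, Finset.sum_pow_eq_sum_piAntidiag]
    congr 1
    refine Finset.sum_congr rfl fun v hv => ?_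
    congr 1
    · have hspec := Nat.multinomial_spec (Finset.univ : Finset (Fin k)) v
      rw [(Finset.mem_piAntidiag.mp hv).1] at hspec
      rw [eq_div_iff (Finset.prod_ne_zero_iff.mpr fun i _ => by positivity), mul_comm]
      exact_mod_cast hspec
    · refine Finset.prod_congr rfl fun i _ => ?_
      rw [← Real.rpow_mul_natCast (hp0 i x)]
      congr 1
      ring
  change ∫ x : Fin d → ℝ, ((1 / (k : ℝ)) * ∑ i, p i x ^ ((1 : ℝ) / (n : ℝ))) ^ (n : ℝ) = _
  rw [hexpand, integral_const_mul, integral_finsetSum _ fun v hv => (hmean v hv).1.const_mul _]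
  congr 1
  refine Finset.sum_congr rfl fun v hv => ?_
  rw [integral_const_mul, (hmean v hv).2]
end
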